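/- arXiv:2010.01059 — 5 statements merged into one kernel-verified Lean document; each statement's English description precedes it below -/
import Mathlib

section
/- Fix positive integers mu and K_c and pairwise distinct elements ftilde_1, ..., ftilde_{max(mu,K_c)} of a field F. Define the pole assignment f_{j,i} (for positive integers j and i with 1 <= i <= K_c) by: if mu >= K_c then f_{j,i} = ftilde_{((j-i) mod mu)+1}, and if mu < K_c then f_{j,i} = ftilde_{((i-1-((j-1) mod mu)) mod K_c)+1}. Then for every i in [K_c] and all positive integers m <= n with n-m+1 <= mu, the elements f_{j,i} for j in {m, m+1, ..., n} are pairwise distinct. -/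
/-!
Reduction modulo `k` is injective on any `k` consecutive integers. If `Kc ≤ mu`, apply this to
`j - i` modulo `mu`. If `mu < Kc`, the inner residues modulo `mu` are distinct and span fewer than
`Kc` values, so the outer reduction modulo `Kc` keeps them apart.
-/

theorem emod_injOn_Ico (a k : ℤ) : Set.InjOn (· % k) (Set.Ico a (a + k)) := by
  rintro x ⟨hax, hxk⟩ y ⟨hay, hyk⟩ hxy
  have habs : |y - x| < k := abs_lt.mpr ⟨by linarith, by linarith⟩
  linarith [Int.eq_zero_of_abs_lt_dvd (Int.ModEq.dvd hxy) habs]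

theorem natMod_injOn_Ico (a : ℤ) (k : ℕ) : Set.InjOn (Int.natMod · k) (Set.Ico a (a + k)) := by
  intro x hx y hy hxy
  have hk : (k : ℤ) ≠ 0 := by have := hx.1.trans_lt hx.2; omega
  have hcast (z : ℤ) : (z.natMod k : ℤ) = z % k := Int.toNat_of_nonneg (Int.emod_nonneg z hk)
  exact emod_injOn_Ico a k hx hy (by simpa only [hcast] using congrArg (Nat.cast (R := ℤ)) hxy)

/-- The index of the pole that the cyclic assignment puts in position `(j, i)`, counted from `0`: it
is `k` where the paper writes `ftilde_{k+1}`. Positions are integers, so that no subtraction is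
truncated; rows and columns of the paper start at `1`. -/
def cyclicPoleIndex (mu Kc : ℕ) (j i : ℤ) : ℕ :=
  if Kc ≤ mu then (j - i).natMod mu else (i - 1 - (j - 1) % mu).natMod Kc

theorem cyclicPoleIndex_lt_max {mu : ℕ} (hmu : 0 < mu) (Kc : ℕ) (j i : ℤ) :
    cyclicPoleIndex mu Kc j i < max mu Kc := by
  unfold cyclicPoleIndex
  split_ifs with hc
  · exact (Int.natMod_lt hmu.ne').trans_le (le_max_left mu Kc)
  · exact (Int.natMod_lt (by omega)).trans_le (le_max_right mu Kc)

theorem cyclicPoleIndex_injOn_Ico (mu Kc : ℕ) (i m : ℤ) :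
    Set.InjOn (cyclicPoleIndex mu Kc · i) (Set.Ico m (m + mu)) := by
  rintro x ⟨hmx, hxm⟩ y ⟨hmy, hym⟩ hxy
  simp only [cyclicPoleIndex] at hxy
  split_ifs at hxy with hc
  · have hsub : x - i = y - i :=
      natMod_injOn_Ico (m - i) mu ⟨by omega, by omega⟩ ⟨by omega, by omega⟩ hxy
    exact sub_left_injective hsub
  · have hmu : (0 : ℤ) < mu := by omega
    have hwindow (z : ℤ) : i - 1 - (z - 1) % mu ∈ Set.Ico (i - mu) (i - mu + Kc) := by
      have := Int.emod_nonneg (z - 1) hmu.ne'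
      have := Int.emod_lt_of_pos (z - 1) hmu
      constructor <;> omega
    have hinner : (x - 1) % mu = (y - 1) % mu :=
      sub_right_injective (natMod_injOn_Ico (i - mu) Kc (hwindow x) (hwindow y) hxy)
    have hpred : x - 1 = y - 1 :=
      emod_injOn_Ico (m - 1) mu ⟨by omega, by omega⟩ ⟨by omega, by omega⟩ hinner
    exact sub_left_injective hpred

theorem acsa_pole_assignment_row_distinct_general {α : Type*} {mu Kc : ℕ} {ftilde : ℕ → α}
    (hinj : Set.InjOn ftilde (Set.Iio (max mu Kc))) (i m : ℤ) :
    Set.InjOn (fun j => ftilde (cyclicPoleIndex mu Kc j i)) (Set.Ico m (m + mu)) := by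
  intro x hx y hy hxy
  have hmu : 0 < mu := by have := hx.1.trans_lt hx.2; omega
  exact cyclicPoleIndex_injOn_Ico mu Kc i m hx hy <|
    hinj (cyclicPoleIndex_lt_max hmu Kc x i) (cyclicPoleIndex_lt_max hmu Kc y i) hxy

/-- Proposition 1 (pole assignment distinctness along rows): for the cyclic pole
assignment `f`, for every `i ∈ [K_c]` and all positive integers `m ≤ n` with
`n - m + 1 ≤ μ`, the elements `f j i` for `j ∈ {m, …, n}` are pairwise distinct.
Here `ftilde k` denotes the element `ftilde_{k+1}` of the paper (0-indexed), and the
`ftilde`'s are pairwise distinct among indices `< max μ K_c`. -/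
theorem acsa_pole_assignment_row_distinct
    {F : Type*} [Field F] (mu Kc : ℕ) (hmu : 0 < mu) (hKc : 0 < Kc)
    (ftilde : ℕ → F)
    (hdist : ∀ a b : ℕ, a < max mu Kc → b < max mu Kc → ftilde a = ftilde b → a = b)
    (f : ℕ → ℕ → F)
    (hf : ∀ j i : ℕ,
      f j i =
        if Kc ≤ mu then
          ftilde ((((j : ℤ) - (i : ℤ)) % (mu : ℤ)).toNat)
        else
          ftilde ((((i : ℤ) - 1 - (((j : ℤ) - 1) % (mu : ℤ))) % (Kc : ℤ)).toNat))
    (i : ℕ) (hi1 : 1 ≤ i) (hi2 : i ≤ Kc)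
    (m n : ℕ) (hm : 1 ≤ m) (hmn : m ≤ n) (hlen : n - m + 1 ≤ mu) :
    ∀ j j' : ℕ, m ≤ j → j ≤ n → m ≤ j' → j' ≤ n → f j i = f j' i → j = j' := by
  intro j j' hmj hjn hmj' hjn' hjj'
  have hpole (k : ℕ) : f k i = ftilde (cyclicPoleIndex mu Kc k i) :=
    (hf k i).trans (apply_ite ftilde _ _ _).symm
  have hcast : (j : ℤ) = j' :=
    acsa_pole_assignment_row_distinct_general (fun a ha b hb => hdist a b ha hb) i m
      ⟨by omega, by omega⟩ ⟨by omega, by omega⟩ (by simpa only [hpole] using hjj')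
  exact_mod_cast hcast
end

section
/- Fix positive integers mu and K_c and pairwise distinct elements ftilde_1, ..., ftilde_{max(mu,K_c)} of a field F. Define the pole assignment f_{j,i} (for positive integers j and i with 1 <= i <= K_c) by: if mu >= K_c then f_{j,i} = ftilde_{((j-i) mod mu)+1}, and if mu < K_c then f_{j,i} = ftilde_{((i-1-((j-1) mod mu)) mod K_c)+1}. Then for every positive integer j, the elements f_{j,1}, f_{j,2}, ..., f_{j,K_c} are pairwise distinct. -/
/-!
The case split on `Kc ≤ mu` selects the larger of the two periods as the modulus. In both cases
the residue indexing the pole is affine in `i` with slope `±1`, so in a fixed column two poles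
agree exactly when their indices are congruent modulo `max mu Kc`.
-/

/-- The cyclic pole assignment `f_{j,i}` of the nodes `ftilde`, as a function of the column `j` and
the index `i`. The nodes are 0-indexed, so `ftilde k` is `ftilde_{k+1}` of the paper; `i` and `j`
are integers so that their differences do not truncate. -/
def cyclicPole {α : Type*} (mu Kc : ℕ) (ftilde : ℕ → α) (j i : ℤ) : α :=
  if Kc ≤ mu then
    ftilde ((j - i) % (mu : ℤ)).toNat
  else
    ftilde ((i - 1 - (j - 1) % (mu : ℤ)) % (Kc : ℤ)).toNat

theorem apply_emod_toNat_eq_iff_modEq {α : Type*} {m : ℕ} (hm : 0 < m) {g : ℕ → α}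
    (hg : Set.InjOn g (Set.Iio m)) {x y : ℤ} :
    g (x % (m : ℤ)).toNat = g (y % (m : ℤ)).toNat ↔ x ≡ y [ZMOD m] := by
  have hm0 : (m : ℤ) ≠ 0 := by exact_mod_cast hm.ne'
  have toNat_emod_lt (z : ℤ) : (z % (m : ℤ)).toNat < m :=
    (Int.toNat_lt' hm).2 (Int.emod_lt_of_pos z (by exact_mod_cast hm))
  rw [hg.eq_iff (toNat_emod_lt x) (toNat_emod_lt y), ← Int.natCast_inj,
    Int.toNat_of_nonneg (Int.emod_nonneg x hm0), Int.toNat_of_nonneg (Int.emod_nonneg y hm0),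
    Int.ModEq]

theorem eq_of_intModEq_of_mem_Ico {m a x y : ℤ} (h : x ≡ y [ZMOD m])
    (hx : x ∈ Set.Ico a (a + m)) (hy : y ∈ Set.Ico a (a + m)) : x = y := by
  obtain ⟨hax, hxm⟩ := hx
  obtain ⟨hay, hym⟩ := hy
  have abs_sub_lt : |y - x| < m := abs_lt.2 ⟨by linarith, by linarith⟩
  exact (sub_eq_zero.1 (Int.eq_zero_of_abs_lt_dvd h.dvd abs_sub_lt)).symm

theorem cyclicPole_eq_iff_modEq {α : Type*} {mu Kc : ℕ} (hpos : 0 < max mu Kc) {ftilde : ℕ → α}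
    (hinj : Set.InjOn ftilde (Set.Iio (max mu Kc))) (j : ℤ) {i i' : ℤ} :
    cyclicPole mu Kc ftilde j i = cyclicPole mu Kc ftilde j i' ↔
      i ≡ i' [ZMOD (max mu Kc : ℕ)] := by
  unfold cyclicPole
  split_ifs with hle
  · rw [max_eq_left hle] at hpos hinj ⊢
    rw [apply_emod_toNat_eq_iff_modEq hpos hinj, Int.modEq_iff_dvd, sub_sub_sub_cancel_left,
      ← Int.modEq_iff_dvd, Int.modEq_comm]
  · rw [max_eq_right (not_le.1 hle).le] at hpos hinj ⊢
    rw [apply_emod_toNat_eq_iff_modEq hpos hinj, Int.modEq_iff_dvd, sub_sub_sub_cancel_right,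
      sub_sub_sub_cancel_right, ← Int.modEq_iff_dvd]

theorem acsa_pole_assignment_col_distinct_general {α : Type*} {mu Kc : ℕ} {ftilde : ℕ → α}
    (hinj : Set.InjOn ftilde (Set.Iio (max mu Kc))) (j a : ℤ) :
    Set.InjOn (cyclicPole mu Kc ftilde j) (Set.Ico a (a + (max mu Kc : ℕ))) := by
  intro i hi i' hi' h
  have hpos : 0 < max mu Kc := by
    have : a < a + (max mu Kc : ℕ) := hi.1.trans_lt hi.2
    omega
  exact eq_of_intModEq_of_mem_Ico ((cyclicPole_eq_iff_modEq hpos hinj j).1 h) hi hi'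

/-- Proposition 2 (pole assignment distinctness along columns): for the cyclic pole
assignment `f`, for every positive integer `j`, the elements `f j 1, …, f j K_c` are
pairwise distinct. Here `ftilde k` denotes the element `ftilde_{k+1}` of the paper
(0-indexed), and the `ftilde`'s are pairwise distinct among indices `< max μ K_c`. -/
theorem acsa_pole_assignment_col_distinct
    {F : Type*} [Field F] (mu Kc : ℕ) (hmu : 0 < mu) (hKc : 0 < Kc)
    (ftilde : ℕ → F)
    (hdist : ∀ a b : ℕ, a < max mu Kc → b < max mu Kc → ftilde a = ftilde b → a = b)
    (f : ℕ → ℕ → F)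
    (hf : ∀ j i : ℕ,
      f j i =
        if Kc ≤ mu then
          ftilde ((((j : ℤ) - (i : ℤ)) % (mu : ℤ)).toNat)
        else
          ftilde ((((i : ℤ) - 1 - (((j : ℤ) - 1) % (mu : ℤ))) % (Kc : ℤ)).toNat))
    (j : ℕ) (hj : 1 ≤ j) :
    ∀ i i' : ℕ, 1 ≤ i → i ≤ Kc → 1 ≤ i' → i' ≤ Kc → f j i = f j i' → i = i' := by
  intro i i' hi hiK hi' hiK' h
  exact_mod_cast acsa_pole_assignment_col_distinct_general (fun a ha b hb => hdist a b ha hb) j 1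
    ⟨by omega, by omega⟩ ⟨by omega, by omega⟩ ((hf j i).symm.trans (h.trans (hf j i')))
end

section
/- Let F be a field, let R and V be natural numbers, and let f_1, ..., f_R and a_1, ..., a_{R+V} be elements of F such that all R + (R+V) elements f_1, ..., f_R, a_1, ..., a_{R+V} are pairwise distinct. Then the (R+V) x (R+V) matrix M over F whose entry in row n and column j equals 1/(f_j - a_n) for 1 <= j <= R, and equals a_n^{m-1} in column R+m for 1 <= m <= V, is invertible (equivalently, its determinant is nonzero). -/
/-!
A vector in the kernel of the matrix lists, up to sign, the coefficients of a partial fraction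
`q(x) + ∑ j, c j / (x - f j)` with `deg q < V` that vanishes at all `R + V` evaluation points.
Clearing denominators gives a polynomial of degree less than `R + V` with `R + V` roots, so this
numerator is zero, and uniqueness of partial fraction decompositions makes all coefficients zero.
-/

open Polynomial Lagrange Matrix

section PartialFraction

variable {F κ : Type*} [Field F] {s : Finset κ} {f c : κ → F} {q : F[X]}

/-- The numerator of the partial fraction `q + ∑ j ∈ s, c j / (X - f j)` over the common
denominator `nodal s f = ∏ j ∈ s, (X - f j)`. -/
noncomputable def partialFractionNumerator [DecidableEq κ] (s : Finset κ) (f c : κ → F)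
    (q : F[X]) : F[X] :=
  q * nodal s f + ∑ j ∈ s, C (c j) * nodal (s.erase j) f

theorem degree_partialFractionNumerator_lt [DecidableEq κ] {n : ℕ} (hq : q.degree < n) :
    (partialFractionNumerator s f c q).degree < (n + s.card : ℕ) := by
  refine (degree_add_le _ _).trans_lt (max_lt ?_ ?_)
  · rw [degree_mul, degree_nodal, Nat.cast_add]
    exact WithBot.add_lt_add_right (WithBot.natCast_ne_bot _) hq
  · refine (degree_sum_le _ _).trans_lt
      ((Finset.sup_lt_iff (WithBot.bot_lt_coe _)).mpr fun j hj => ?_)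
    calc (C (c j) * nodal (s.erase j) f).degree
        ≤ (nodal (s.erase j) f).degree := smul_eq_C_mul (c j) ▸ degree_smul_le (c j) _
      _ = (s.erase j).card := degree_nodal
      _ < (n + s.card : ℕ) := by
        exact_mod_cast (Finset.card_erase_lt_of_mem hj).trans_le (Nat.le_add_left _ _)

theorem eval_partialFractionNumerator [DecidableEq κ] {x : F} (hx : ∀ j ∈ s, x ≠ f j) :
    (partialFractionNumerator s f c q).eval x =
      (q.eval x + ∑ j ∈ s, c j / (x - f j)) * (nodal s f).eval x := by
  have clear_pole (j : κ) (hj : j ∈ s) :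
      c j * (nodal (s.erase j) f).eval x = c j / (x - f j) * (nodal s f).eval x := by
    rw [nodal_eq_mul_nodal_erase hj, eval_mul, eval_sub, eval_X, eval_C, ← mul_assoc,
      div_mul_cancel₀ _ (sub_ne_zero.mpr (hx j hj))]
  simp only [partialFractionNumerator, eval_add, eval_mul, eval_finsetSum, eval_C, add_mul,
    Finset.sum_mul, Finset.sum_congr rfl clear_pole]

theorem partialFractionNumerator_eq_zero_iff [DecidableEq κ] (hf : Set.InjOn f s) :
    partialFractionNumerator s f c q = 0 ↔ q = 0 ∧ ∀ j ∈ s, c j = 0 := by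
  constructor
  · intro h
    have coprime : Set.Pairwise s fun i j => IsCoprime (X - C (f i)) (X - C (f j)) :=
      fun i hi j hj hij => isCoprime_X_sub_C_of_isUnit_sub
        (sub_ne_zero.mpr (hf.ne hi hj hij)).isUnit
    have degree_lt (b : F) (i : κ) : (C b).degree < (X - C (f i)).degree := by
      rw [degree_X_sub_C]
      exact degree_C_lt
    have unique := quo_mul_prod_add_sum_rem_mul_prod_unique (q₁ := q) (q₂ := 0)
      (r₁ := fun j => C (c j)) (r₂ := fun _ => C 0) (fun i _ => monic_X_sub_C (f i)) coprime
      (fun i _ => degree_lt (c i) i) (fun i _ => degree_lt 0 i)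
      (by simpa [partialFractionNumerator, nodal_eq] using h)
    simpa only [C_inj] using unique
  · rintro ⟨rfl, hc⟩
    simp +contextual [partialFractionNumerator, hc]

theorem eq_zero_of_partialFraction_eval_eq_zero {ι : Type*} {t : Finset ι} {a : ι → F} {n : ℕ}
    (hf : Set.InjOn f s) (ha : Set.InjOn a t) (hfa : ∀ i ∈ t, ∀ j ∈ s, a i ≠ f j)
    (hq : q.degree < n) (hcard : n + s.card ≤ t.card)
    (hzero : ∀ i ∈ t, q.eval (a i) + ∑ j ∈ s, c j / (a i - f j) = 0) :
    q = 0 ∧ ∀ j ∈ s, c j = 0 := by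
  classical
  rw [← partialFractionNumerator_eq_zero_iff hf]
  refine eq_zero_of_degree_lt_of_eval_index_eq_zero t ha ?_ fun i hi => ?_
  · exact (degree_partialFractionNumerator_lt hq).trans_le (by exact_mod_cast hcard)
  · rw [eval_partialFractionNumerator (hfa i hi), hzero i hi, zero_mul]

end PartialFraction

section CauchyVandermonde

variable {F ι κ : Type*} [Field F]

/-- The Cauchy–Vandermonde matrix with poles `f` and evaluation points `a`: the Cauchy columns
`1 / (f j - a i)` are indexed by the poles and followed by the `n` columns of powers of `a`. -/
def cauchyVandermonde (f : κ → F) (a : ι → F) (n : ℕ) : Matrix ι (κ ⊕ Fin n) F :=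
  fromCols (.of fun i j => 1 / (f j - a i)) (.of fun i m => a i ^ (m : ℕ))

variable [Fintype κ] {f : κ → F} {a : ι → F} {n : ℕ}

theorem cauchyVandermonde_mulVec_apply (v : κ ⊕ Fin n → F) (i : ι) :
    (cauchyVandermonde f a n *ᵥ v) i =
      ((degreeLTEquiv F n).symm (v ∘ Sum.inr) : F[X]).eval (a i) +
        ∑ j, -v (.inl j) / (a i - f j) := by
  have cauchy_term (j : κ) : 1 / (f j - a i) * v (.inl j) = -v (.inl j) / (a i - f j) := by
    rw [one_div_mul_eq_div, ← neg_sub (a i), div_neg, neg_div]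
  rw [eval_eq_sum_degreeLTEquiv (Subtype.property _), add_comm]
  simp [cauchyVandermonde, mulVec, dotProduct, ← cauchy_term, mul_comm]

theorem linearIndependent_col_cauchyVandermonde [Fintype ι] (hf : f.Injective)
    (ha : a.Injective) (hfa : ∀ j i, f j ≠ a i) (hcard : n + Fintype.card κ ≤ Fintype.card ι) :
    LinearIndependent F (cauchyVandermonde f a n).col := by
  classical
  rw [← mulVec_injective_iff, ← coe_mulVecLin, injective_iff_map_eq_zero]
  intro v hv
  obtain ⟨hq, hc⟩ := eq_zero_of_partialFraction_eval_eq_zero (s := .univ) (t := .univ)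
    hf.injOn ha.injOn (fun i _ j _ => (hfa j i).symm)
    (mem_degreeLT.mp ((degreeLTEquiv F n).symm (v ∘ Sum.inr)).property) hcard
    fun i _ => (cauchyVandermonde_mulVec_apply v i).symm.trans (congrFun hv i)
  have vandermonde_part : v ∘ Sum.inr = 0 := by simpa using hq
  ext (j | m)
  · exact neg_eq_zero.mp (hc j (Finset.mem_univ j))
  · exact congrFun vandermonde_part m

end CauchyVandermonde

/-- Nonsingularity of Cauchy–Vandermonde matrices: if the poles `f 1, …, f R` and the
evaluation points `a 1, …, a (R+V)` are pairwise distinct (all `R + (R+V)` elements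
together), then the `(R+V) × (R+V)` matrix `M` whose entry in row `n`, column `j` is
`1 / (f j - a n)` for the first `R` columns and `(a n)^(m-1)` in column `R + m` for
`1 ≤ m ≤ V`, has nonzero determinant (is invertible). -/
theorem cauchy_vandermonde_det_ne_zero
    {F : Type*} [Field F] (R V : ℕ)
    (f : Fin R → F) (a : Fin (R + V) → F)
    (hf : Function.Injective f) (ha : Function.Injective a)
    (hfa : ∀ (j : Fin R) (n : Fin (R + V)), f j ≠ a n)
    (M : Matrix (Fin (R + V)) (Fin (R + V)) F)
    (hM₁ : ∀ (n : Fin (R + V)) (j : Fin (R + V)) (h : (j : ℕ) < R),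
      M n j = 1 / (f ⟨j, h⟩ - a n))
    (hM₂ : ∀ (n : Fin (R + V)) (j : Fin (R + V)), R ≤ (j : ℕ) →
      M n j = a n ^ ((j : ℕ) - R)) :
    M.det ≠ 0 ∧ IsUnit M := by
  have hM : M.col = (cauchyVandermonde f a V).col ∘ finSumFinEquiv.symm := by
    ext j n
    refine Fin.addCases (fun j => ?_) (fun m => ?_) j
    · simp [cauchyVandermonde, hM₁]
    · simp [cauchyVandermonde, hM₂]
  have isUnit_M : IsUnit M := by
    rw [← linearIndependent_cols_iff_isUnit, hM]
    exact (linearIndependent_col_cauchyVandermonde hf ha hfa (by simp [add_comm])).comp _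
      finSumFinEquiv.symm.injective
  exact ⟨((isUnit_iff_isUnit_det M).mp isUnit_M).ne_zero, isUnit_M⟩
end

section
/- Let F be a field, R, V, B, N natural numbers with N >= R + V + 2B and R + V >= 1. Let f_1, ..., f_R be pairwise distinct elements of F and let a_1, ..., a_N be pairwise distinct elements of F such that no a_n equals any f_j. For a coefficient pair (w, c) with w in F^R and c in F^V, define its codeword E(w,c) in F^N by E(w,c)_n = sum_{j=1}^R w_j/(a_n - f_j) + sum_{m=1}^V c_m a_n^{m-1}. Then any two distinct coefficient pairs (w,c) != (w',c') produce codewords that differ in at least N - (R+V) + 1 >= 2B + 1 coordinates; consequently, for every y in F^N there is at most one coefficient pair (w,c) whose codeword E(w,c) differs from y in at most B coordinates. -/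
/-!
Clearing denominators turns `∑ j, w j / (x - f j) + q x` into a polynomial of degree less than
`R + V`, where `R` is the number of poles and `deg q < V`. If two codewords agree in at least
`R + V` coordinates, their numerators agree at `R + V` points and hence coincide, and by uniqueness
of partial fractions the numerator determines `w` and `q`.
-/

open Finset Polynomial Lagrange

section Hamming

variable {ι : Type*} {β : ι → Type*} [Fintype ι] [∀ i, DecidableEq (β i)]

theorem card_filter_eq_add_hammingDist (x y : ∀ i, β i) :
    #{i | x i = y i} + hammingDist x y = Fintype.card ι :=
  card_filter_add_card_filter_not (s := univ) fun i ↦ x i = y i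

theorem eq_of_hammingDist_le_of_pairwise {α : Type*} {E : α → ∀ i, β i} {B : ℕ}
    (hE : Pairwise fun u v ↦ 2 * B < hammingDist (E u) (E v)) {y : ∀ i, β i} {u v : α}
    (hu : hammingDist (E u) y ≤ B) (hv : hammingDist (E v) y ≤ B) : u = v := by
  by_contra huv
  have hfar : 2 * B < hammingDist (E u) (E v) := hE huv
  have htri := hammingDist_triangle_right (E u) (E v) y
  omega

end Hamming

theorem eval_ofFn_eq_sum {S : Type*} [Semiring S] [DecidableEq S] {n : ℕ} (c : Fin n → S) (x : S) :
    (ofFn n c).eval x = ∑ m, c m * x ^ (m : ℕ) := by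
  simp only [ofFn_eq_sum_monomial, eval_finsetSum, eval_monomial]

section Numerator

variable {ι S : Type*} [Fintype ι] [DecidableEq ι] [CommRing S]

/-- The numerator of the rational function `∑ j, w j / (X - f j) + q` over the common denominator
`∏ j, (X - f j)`, written as a polynomial so that uniqueness and degree bounds apply to it. -/
noncomputable def cauchyVandermondeNumerator (f w : ι → S) (q : S[X]) : S[X] :=
  q * nodal univ f + ∑ j, C (w j) * nodal (univ.erase j) f

theorem degree_cauchyVandermondeNumerator_lt (f w : ι → S) {q : S[X]} {V : ℕ}
    (hq : q.degree < V) :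
    (cauchyVandermondeNumerator f w q).degree < (Fintype.card ι + V : ℕ) := by
  nontriviality S
  refine (degree_add_le _ _).trans_lt (max_lt ?_ ?_)
  · rw [nodal_monic.degree_mul, degree_nodal, card_univ, add_comm, Nat.cast_add]
    exact WithBot.add_lt_add_left (WithBot.natCast_ne_bot _) hq
  · refine (degree_sum_le _ _).trans_lt
      ((Finset.sup_lt_iff (WithBot.bot_lt_coe _)).2 fun j _ ↦ ?_)
    calc (C (w j) * nodal (univ.erase j) f).degree
      _ ≤ (nodal (univ.erase j) f).degree := by
        rw [← smul_eq_C_mul]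
        exact degree_smul_le _ _
      _ = (#(univ.erase j) : ℕ) := degree_nodal
      _ < (Fintype.card ι + V : ℕ) :=
        Nat.cast_lt.2 ((card_erase_lt_of_mem (mem_univ j)).trans_le (Nat.le_add_right _ _))

end Numerator

section CauchyVandermonde

variable {ι F : Type*} [Fintype ι] [Field F] {f : ι → F}

/-- The Cauchy–Vandermonde evaluation function `x ↦ ∑ j, w j / (x - f j) + q x` with poles `f`.
The Vandermonde coefficients are packaged as the polynomial `q`; at a pole, the corresponding
fraction takes the junk value `0`. -/
def cauchyVandermondeEval (f w : ι → F) (q : F[X]) (x : F) : F :=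
  ∑ j, w j / (x - f j) + q.eval x

theorem eval_cauchyVandermondeNumerator [DecidableEq ι] (w : ι → F) (q : F[X]) {x : F}
    (hx : ∀ j, x ≠ f j) :
    (cauchyVandermondeNumerator f w q).eval x =
      cauchyVandermondeEval f w q x * (nodal univ f).eval x := by
  have hterm (j : ι) : w j / (x - f j) * (nodal univ f).eval x =
      w j * (nodal (univ.erase j) f).eval x := by
    rw [nodal_eq_mul_nodal_erase (mem_univ j), eval_mul, eval_sub, eval_X, eval_C, ← mul_assoc,
      div_mul_cancel₀ _ (sub_ne_zero.2 (hx j))]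
  simp only [cauchyVandermondeNumerator, cauchyVandermondeEval, eval_add, eval_mul,
    eval_finsetSum, eval_C, add_mul, sum_mul, hterm, add_comm]

theorem cauchyVandermondeNumerator_inj [DecidableEq ι] (hf : Function.Injective f)
    {w w' : ι → F} {q q' : F[X]} :
    cauchyVandermondeNumerator f w q = cauchyVandermondeNumerator f w' q' ↔
      w = w' ∧ q = q' := by
  refine ⟨fun h ↦ ?_, by rintro ⟨rfl, rfl⟩; rfl⟩
  have hdeg (u : ι → F) (j : ι) : (C (u j)).degree < (X - C (f j)).degree :=
    degree_C_le.trans_lt (by rw [degree_X_sub_C]; exact zero_lt_one)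
  obtain ⟨hq, hw⟩ := quo_mul_prod_add_sum_rem_mul_prod_unique (s := univ)
    (fun j _ ↦ monic_X_sub_C (f j)) ((pairwise_coprime_X_sub_C hf).set_pairwise _)
    (fun j _ ↦ hdeg w j) (fun j _ ↦ hdeg w' j) h
  exact ⟨funext fun j ↦ C_injective (hw j (mem_univ j)), hq⟩

variable {κ : Type*} {a : κ → F} {w w' : ι → F} {q q' : F[X]} {V : ℕ}

theorem eq_of_cauchyVandermondeEval_eq_on (hf : Function.Injective f) {s : Finset κ}
    (ha : Set.InjOn a s) (hfa : ∀ n ∈ s, ∀ j, a n ≠ f j) (hs : Fintype.card ι + V ≤ #s)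
    (hq : q.degree < V) (hq' : q'.degree < V)
    (h : ∀ n ∈ s, cauchyVandermondeEval f w q (a n) = cauchyVandermondeEval f w' q' (a n)) :
    w = w' ∧ q = q' := by
  classical
  have hdeg (u : ι → F) {p : F[X]} (hp : p.degree < V) :
      (cauchyVandermondeNumerator f u p).degree < #s :=
    (degree_cauchyVandermondeNumerator_lt f u hp).trans_le (Nat.cast_le.2 hs)
  refine (cauchyVandermondeNumerator_inj hf).1 <|
    eq_of_degrees_lt_of_eval_index_eq s ha (hdeg w hq) (hdeg w' hq') fun n hn ↦ ?_
  rw [eval_cauchyVandermondeNumerator w q (hfa n hn),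
    eval_cauchyVandermondeNumerator w' q' (hfa n hn), h n hn]

theorem card_lt_hammingDist_cauchyVandermondeEval_add [Fintype κ] [DecidableEq F]
    (hf : Function.Injective f) (ha : Function.Injective a) (hfa : ∀ n j, a n ≠ f j)
    (hq : q.degree < V) (hq' : q'.degree < V) (hne : ¬(w = w' ∧ q = q')) :
    Fintype.card κ < hammingDist (fun n ↦ cauchyVandermondeEval f w q (a n))
      (fun n ↦ cauchyVandermondeEval f w' q' (a n)) + (Fintype.card ι + V) := by
  set x : κ → F := fun n ↦ cauchyVandermondeEval f w q (a n)
  set y : κ → F := fun n ↦ cauchyVandermondeEval f w' q' (a n)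
  have hagree : #{n | x n = y n} < Fintype.card ι + V := by
    by_contra! hle
    exact hne <| eq_of_cauchyVandermondeEval_eq_on hf ha.injOn (fun n _ ↦ hfa n) hle hq hq'
      fun n hn ↦ (mem_filter.1 hn).2
  have hcard := card_filter_eq_add_hammingDist x y
  omega

end CauchyVandermonde

/-- MDS / Byzantine-tolerance property of Cauchy–Vandermonde codewords: with
`N ≥ R + V + 2B` and `R + V ≥ 1`, pairwise distinct poles `f`, pairwise distinct
evaluation points `a` avoiding the poles, and encoding
`E w c n = ∑ j, w j / (a n - f j) + ∑ m, c m * (a n)^(m-1)`,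
any two distinct coefficient pairs produce codewords at Hamming distance at least
`N - (R+V) + 1 ≥ 2B + 1`; consequently, for every `y : Fin N → F` there is at most one
coefficient pair whose codeword is within Hamming distance `B` of `y`. -/
theorem cauchy_vandermonde_mds_byzantine
    {F : Type*} [Field F] [DecidableEq F] (R V B N : ℕ)
    (hN : R + V + 2 * B ≤ N) (hRV : 1 ≤ R + V)
    (f : Fin R → F) (hf : Function.Injective f)
    (a : Fin N → F) (ha : Function.Injective a)
    (hfa : ∀ (n : Fin N) (j : Fin R), a n ≠ f j)
    (E : (Fin R → F) → (Fin V → F) → Fin N → F)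
    (hE : ∀ (w : Fin R → F) (c : Fin V → F) (n : Fin N),
      E w c n = (∑ j : Fin R, w j / (a n - f j)) + (∑ m : Fin V, c m * a n ^ (m : ℕ))) :
    (2 * B + 1 ≤ N - (R + V) + 1) ∧
    (∀ (w w' : Fin R → F) (c c' : Fin V → F), (w, c) ≠ (w', c') →
      N - (R + V) + 1 ≤ hammingDist (E w c) (E w' c')) ∧
    (∀ (y : Fin N → F) (w w' : Fin R → F) (c c' : Fin V → F),
      hammingDist (E w c) y ≤ B → hammingDist (E w' c') y ≤ B → (w, c) = (w', c')) := by
  have hE_eval (w : Fin R → F) (c : Fin V → F) :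
      E w c = fun n ↦ cauchyVandermondeEval f w (ofFn V c) (a n) := by
    funext n
    rw [hE, cauchyVandermondeEval, eval_ofFn_eq_sum]
  have hdist : Pairwise fun u v : (Fin R → F) × (Fin V → F) ↦
      N - (R + V) + 1 ≤ hammingDist (E u.1 u.2) (E v.1 v.2) := by
    intro u v huv
    have hne : ¬(u.1 = v.1 ∧ ofFn V u.2 = ofFn V v.2) := fun h ↦
      huv (Prod.ext h.1 (injective_ofFn V h.2))
    have hlt := card_lt_hammingDist_cauchyVandermondeEval_add hf ha hfa
      (ofFn_degree_lt u.2) (ofFn_degree_lt v.2) hne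
    rw [← hE_eval, ← hE_eval, Fintype.card_fin, Fintype.card_fin] at hlt
    omega
  have hmargin : 2 * B + 1 ≤ N - (R + V) + 1 := by omega
  exact ⟨hmargin, fun w w' c c' hne ↦ hdist hne, fun y w w' c c' hw hw' ↦
    eq_of_hammingDist_le_of_pairwise (E := fun u : (Fin R → F) × (Fin V → F) ↦ E u.1 u.2)
      (fun u v huv ↦ hmargin.trans (hdist huv)) hw hw'⟩
end

section
/- Let F be a finite field, let K >= 1, M >= 1 and T >= 1 be natural numbers, let a_1, ..., a_T be pairwise distinct elements of F, and let f_1, ..., f_M be elements of F with f_u != a_n for all u in [M] and n in [T]. Let the random vectors Y_{u,s} (u in [M], s in [T]) be independent and uniformly distributed on F^K. Then for every choice of e_1, ..., e_M in F^K, the joint distribution of the tuple ( e_u + (a_n - f_u) * sum_{s=1}^{T} a_n^{s-1} Y_{u,s} )_{u in [M], n in [T]} is the uniform distribution on (F^K)^{M x T}. In particular, this joint distribution does not depend on the vectors e_1, ..., e_M. -/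
/-!
The query map is a composition of bijections. For each row `u`, the noise `(Y u s)_s` is multiplied
by the Vandermonde matrix of the evaluation points, which is invertible because its determinant is a
product of differences `a m - a n`; then each server's share is scaled by the unit `a n - f u` and
translated by `e u`. A bijection carries the uniform distribution to the uniform distribution.
-/

theorem map_uniformOfFintype_of_bijective {α β : Type*} [Fintype α] [Nonempty α] [Fintype β]
    [Nonempty β] {g : α → β} (hg : Function.Bijective g) :
    (PMF.uniformOfFintype α).map g = PMF.uniformOfFintype β := by
  classical
  ext b
  obtain ⟨x, rfl⟩ := hg.surjective b
  simp only [PMF.map_apply, hg.injective.eq_iff, tsum_ite_eq', PMF.uniformOfFintype_apply,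
    Fintype.card_of_bijective hg]

theorem isUnit_vandermonde {R : Type*} [CommRing R] {n : ℕ} {v : Fin n → R}
    (hv : Pairwise fun i j => IsUnit (v i - v j)) : IsUnit (Matrix.vandermonde v) := by
  rw [Matrix.isUnit_iff_isUnit_det, Matrix.det_vandermonde]
  simp only [IsUnit.prod_iff, Finset.mem_univ, Finset.mem_Ioi, forall_true_left]
  exact fun i j hij => hv hij.ne'

open scoped Matrix.Module in
theorem bijective_sum_smul_of_isUnit {R V ι : Type*} [Ring R] [AddCommGroup V] [Module R V]
    [Fintype ι] [DecidableEq ι] {A : Matrix ι ι R} (hA : IsUnit A) :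
    Function.Bijective fun (y : ι → V) i => ∑ j, A i j • y j :=
  hA.smul_bijective

theorem bijective_add_smul_of_isUnit {R V : Type*} [Monoid R] [AddGroup V] [MulAction R V]
    {c : R} (hc : IsUnit c) (x : V) : Function.Bijective fun y : V => x + c • y :=
  (AddGroup.addLeft_bijective x).comp hc.smul_bijective

section Queries

variable {R V ι : Type*} [CommRing R] [AddCommGroup V] [Module R V] {T : ℕ}

/-- The ACSA query blocks seen by `T` servers with evaluation points `a`, for storage rows with
poles `f`, selection vectors `e` and noise `Y`. The paper's `F^K` is replaced by a module `V`.
Since `s : Fin T` starts at `0`, the exponent `s` is the paper's `s - 1`. -/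
def acsaQueries (a : Fin T → R) (f : ι → R) (e : ι → V) (Y : ι → Fin T → V) (p : ι × Fin T) : V :=
  e p.1 + (a p.2 - f p.1) • ∑ s : Fin T, a p.2 ^ (s : ℕ) • Y p.1 s

theorem bijective_acsaQueries {a : Fin T → R} (ha : Pairwise fun m n => IsUnit (a m - a n))
    {f : ι → R} (hfa : ∀ u n, IsUnit (a n - f u)) (e : ι → V) :
    Function.Bijective (acsaQueries a f e) := by
  have noise : Function.Bijective fun (y : Fin T → V) n => ∑ s : Fin T, a n ^ (s : ℕ) • y s :=
    bijective_sum_smul_of_isUnit (isUnit_vandermonde ha)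
  have mask (u : ι) : Function.Bijective (Pi.map fun n (y : V) => e u + (a n - f u) • y) :=
    .piMap fun n => bijective_add_smul_of_isUnit (hfa u n) (e u)
  have rows := Function.Bijective.piMap fun u => (mask u).comp noise
  exact (Equiv.curry ι (Fin T) V).symm.bijective.comp rows

theorem acsa_query_T_privacy_general [Fintype V] [Fintype ι] [DecidableEq ι]
    {a : Fin T → R} (ha : Pairwise fun m n => IsUnit (a m - a n))
    {f : ι → R} (hfa : ∀ u n, IsUnit (a n - f u)) (e : ι → V) :
    (PMF.uniformOfFintype (ι → Fin T → V)).map (acsaQueries a f e) =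
      PMF.uniformOfFintype (ι × Fin T → V) :=
  map_uniformOfFintype_of_bijective (bijective_acsaQueries ha hfa e)

end Queries

/-- T-privacy of ACSA queries: with `Y u s` (`u ∈ [M]`, `s ∈ [T]`) independent uniform
random vectors on `F^K` (modeled as a single uniform random variable on the product),
the tuple of query blocks `e u + (a n - f u) • ∑ s, (a n)^(s-1) • Y u s` observed by
`T` colluding servers with pairwise distinct evaluation points `a 1, …, a T` is
uniformly distributed on `(F^K)^(M × T)`; in particular its distribution does not
depend on the selection vectors `e u`. -/
theorem acsa_query_T_privacy
    {F : Type*} [Field F] [Fintype F] [DecidableEq F]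
    (K M T : ℕ) (hK : 1 ≤ K) (hM : 1 ≤ M) (hT : 1 ≤ T)
    (a : Fin T → F) (ha : Function.Injective a)
    (f : Fin M → F) (hfa : ∀ (u : Fin M) (n : Fin T), f u ≠ a n)
    (e : Fin M → Fin K → F) :
    PMF.map
      (fun (Y : Fin M → Fin T → Fin K → F) (p : Fin M × Fin T) =>
        e p.1 + (a p.2 - f p.1) • ∑ s : Fin T, ((a p.2) ^ (s : ℕ)) • Y p.1 s)
      (PMF.uniformOfFintype (Fin M → Fin T → Fin K → F))
    = PMF.uniformOfFintype (Fin M × Fin T → Fin K → F) :=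
  acsa_query_T_privacy_general (fun _ _ hmn => (sub_ne_zero.2 (ha.ne hmn)).isUnit)
    (fun u n => (sub_ne_zero.2 (hfa u n).symm).isUnit) e
end
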